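/- Let N ≥ 3 be an integer and let b, p be real numbers with 0 < b < 2 and 1 < p < 1 + (4−2b)/(N−2). Then there exists a constant C = C(N, b, p) > 0 such that for every Schwartz function f : ℝ^N → ℂ, ∫_{ℝ^N} ‖x‖^{−b} |f(x)|^{p+1} dx ≤ C ‖∇f‖_{L²}^{(N(p−1)+2b)/2} · ‖f‖_{L²}^{(p+1) − (N(p−1)+2b)/2}. -/

import Mathlib

/-!
The proof splits the weighted integral at a radius `R`. Put `q = 2N / (N - 2)`, the Sobolev exponent.

* On the ball of radius `R`, Hölder's inequality with `|f| ^ (p + 1)` in the Lebesgue space of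
  exponent `q / (p + 1)` leaves a power of `‖x‖` whose local integrability is exactly the
  subcriticality condition `(p - 1) (N - 2) < 4 - 2 b`; by scaling its integral is a multiple of a
  power of `R` (`lintegral_ball_norm_rpow`).
* Outside the ball, `‖x‖ ^ (-b) ≤ R ^ (-b)`, and the integral of `|f| ^ (p + 1)` is interpolated
  between `L²` and `L^q`.

Both contributions are collected in `lintegral_weight_le`. The `L^q` norm is controlled by the
gradient through the Sobolev inequality, extended from compactly supported functions to Schwartz
functions by cutoffs and Fatou's lemma (`sobolev_schwartz`). Choosing `R = ‖f‖₂ / ‖∇f‖₂` gives both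
contributions the same homogeneity in the two norms, that of the claim (`balance`).
-/

open MeasureTheory
open scoped BigOperators
open scoped NNReal ENNReal Topology
open Filter

/-- The operator norm is at most the Hilbert–Schmidt norm. -/
theorem opNorm_sq_le_sum {N : ℕ} (L : EuclideanSpace ℝ (Fin N) →L[ℝ] ℂ) :
    ‖L‖ ^ 2 ≤ ∑ i : Fin N, ‖L (EuclideanSpace.single i 1)‖ ^ 2 := by
  have h : ‖L‖ ≤ √(∑ i : Fin N, ‖L (EuclideanSpace.single i 1)‖ ^ 2) := by
    refine L.opNorm_le_bound (Real.sqrt_nonneg _) fun x => ?_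
    have hx : x = ∑ i, x i • EuclideanSpace.single i (1 : ℝ) := by
      ext j
      simp [Finset.sum_apply, Pi.single_apply]
    calc ‖L x‖ = ‖∑ i, x i • L (EuclideanSpace.single i 1)‖ := by
          conv_lhs => rw [hx]
          simp [map_sum]
      _ ≤ ∑ i, ‖x i‖ * ‖L (EuclideanSpace.single i 1)‖ := by
          refine (norm_sum_le _ _).trans_eq ?_
          simp only [norm_smul]
      _ ≤ √(∑ i, ‖x i‖ ^ 2) * √(∑ i, ‖L (EuclideanSpace.single i 1)‖ ^ 2) :=
          Real.sum_mul_le_sqrt_mul_sqrt _ _ _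
      _ = _ := by rw [← EuclideanSpace.norm_eq, mul_comm]
  calc ‖L‖ ^ 2 ≤ √(∑ i : Fin N, ‖L (EuclideanSpace.single i 1)‖ ^ 2) ^ 2 := by gcongr
    _ = _ := Real.sq_sqrt (by positivity)

theorem exists_cutoff_bound (N : ℕ) : ∃ φ : EuclideanSpace ℝ (Fin N) → ℝ, ContDiff ℝ 1 φ ∧
    HasCompactSupport φ ∧ (∀ x, |φ x| ≤ 1) ∧ φ =ᶠ[𝓝 0] 1 ∧
      ∃ K : ℝ≥0, ∀ x, ‖fderiv ℝ φ x‖ ≤ K := by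
  let φ : ContDiffBump (0 : EuclideanSpace ℝ (Fin N)) := ⟨1, 2, one_pos, one_lt_two⟩
  refine ⟨φ, φ.contDiff, φ.hasCompactSupport, fun x => ?_, φ.eventuallyEq_one, ?_⟩
  · rw [abs_of_nonneg φ.nonneg]; exact φ.le_one
  · have hc : Continuous (fderiv ℝ φ) := (φ.contDiff (n := 1)).continuous_fderiv one_ne_zero
    obtain ⟨K, hK⟩ := hc.bounded_above_of_compact_support (φ.hasCompactSupport.fderiv ℝ)
    exact ⟨K.toNNReal, fun x => (hK x).trans (Real.le_coe_toNNReal K)⟩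

/-- The Sobolev inequality for Schwartz functions. It is applied to the truncations
`φ (x / (n + 1)) f x`, whose gradients exceed that of `f` by `O(1 / n)` in `L²`, and passes to the
limit by Fatou's lemma. -/
theorem sobolev_schwartz (N : ℕ) (hN : 3 ≤ N) (q : ℝ≥0)
    (hq : (q : ℝ)⁻¹ = 2⁻¹ - (N : ℝ)⁻¹) :
    ∃ S : ℝ≥0, ∀ f : SchwartzMap (EuclideanSpace ℝ (Fin N)) ℂ,
      eLpNorm f q volume ≤ S * eLpNorm (fderiv ℝ f) 2 volume := by
  obtain ⟨φ, hφ1, hφc, hφle, hφ0, K, hK⟩ := exists_cutoff_bound N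
  set S : ℝ≥0 := SNormLESNormFDerivOfEqConst ℂ
    (volume : Measure (EuclideanSpace ℝ (Fin N))) (2 : ℝ≥0) with hS
  refine ⟨S, fun f => ?_⟩
  set ε : ℕ → ℝ := fun n => ((n : ℝ) + 1)⁻¹ with hε
  have hεpos : ∀ n, 0 < ε n := fun n => by positivity
  have hεlim : Tendsto ε atTop (𝓝 0) := by
    simpa [hε, one_div] using tendsto_one_div_add_atTop_nhds_zero_nat (𝕜 := ℝ)
  set u : ℕ → EuclideanSpace ℝ (Fin N) → ℂ := fun n x => φ (ε n • x) • f x with hu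
  have hfd : ContDiff ℝ 1 f := f.smooth 1
  have hφn : ∀ n, ContDiff ℝ 1 (fun x => φ (ε n • x)) := fun n =>
    hφ1.comp (contDiff_const_smul _)
  have hud : ∀ n, ContDiff ℝ 1 (u n) := fun n => (hφn n).smul hfd
  have huc : ∀ n, HasCompactSupport (u n) := fun n =>
    (hφc.comp_smul (hεpos n).ne').smul_right
  have hlim : ∀ x, Tendsto (fun n => u n x) atTop (𝓝 (f x)) := fun x => by
    have h1 : Tendsto (fun n => ε n • x) atTop (𝓝 0) := by
      simpa using hεlim.smul_const x
    refine tendsto_const_nhds.congr' ?_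
    filter_upwards [h1.eventually hφ0] with n hn
    simp [hu, hn]
  have hder : ∀ n x, ‖fderiv ℝ (u n) x‖ ≤ ‖(‖fderiv ℝ f x‖ + (K * ε n) * ‖f x‖ : ℝ)‖ := by
    intro n x
    have h1 : fderiv ℝ (fun x => φ (ε n • x)) x = ε n • fderiv ℝ φ (ε n • x) := by
      exact fderiv_comp_smul _
    have h2 : fderiv ℝ (u n) x = φ (ε n • x) • fderiv ℝ f x +
        (fderiv ℝ (fun x => φ (ε n • x)) x).smulRight (f x) :=
      fderiv_fun_smul ((hφn n).differentiable one_ne_zero x) (hfd.differentiable one_ne_zero x)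
    rw [h2, h1]
    refine (norm_add_le _ _).trans (le_trans ?_ (le_abs_self _))
    rw [ContinuousLinearMap.norm_smulRight_apply, norm_smul, norm_smul]
    have h3 : ‖φ (ε n • x)‖ ≤ 1 := hφle _
    have h4 : ‖ε n‖ = ε n := abs_of_pos (hεpos n)
    rw [h4, mul_comm (K : ℝ)]
    have := (hεpos n).le
    gcongr
    · exact mul_le_of_le_one_left (norm_nonneg _) h3
    · exact hK _
  have hstep : ∀ n, eLpNorm (u n) q volume ≤
      S * (eLpNorm (fderiv ℝ f) 2 volume + ENNReal.ofReal (K * ε n) * eLpNorm f 2 volume) := by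
    intro n
    have h1 := eLpNorm_le_eLpNorm_fderiv_of_eq
      (volume : Measure (EuclideanSpace ℝ (Fin N))) (hud n) (huc n) (p := 2) (p' := q)
      one_le_two (by rw [finrank_euclideanSpace_fin]; omega)
      (by rw [finrank_euclideanSpace_fin]; simpa using hq)
    refine h1.trans ?_
    rw [← hS]
    gcongr
    refine (eLpNorm_mono (hder n)).trans ?_
    have hc : Continuous (fderiv ℝ f) := hfd.continuous_fderiv one_ne_zero
    refine (eLpNorm_add_le hc.norm.aestronglyMeasurable
      (continuous_const.mul f.continuous.norm).aestronglyMeasurable (by norm_num)).trans ?_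
    gcongr
    · simp
    · have := eLpNorm_const_smul (K * ε n : ℝ) (fun x => ‖f x‖) ((2:ℝ≥0) : ℝ≥0∞)
        (volume : Measure (EuclideanSpace ℝ (Fin N)))
      have h5 : 0 ≤ K * ε n := mul_nonneg K.2 (hεpos n).le
      rw [eLpNorm_norm, ← ofReal_norm, Real.norm_of_nonneg h5] at this
      exact this.le
  have hL : Tendsto (fun n => (S : ℝ≥0∞) * (eLpNorm (fderiv ℝ f) 2 volume +
      ENNReal.ofReal (K * ε n) * eLpNorm f 2 volume)) atTop
      (𝓝 (S * eLpNorm (fderiv ℝ f) 2 volume)) := by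
    have h1 : Tendsto (fun n => ENNReal.ofReal (K * ε n)) atTop (𝓝 0) := by
      simpa using ENNReal.tendsto_ofReal (hεlim.const_mul (K : ℝ))
    have h2 := ENNReal.Tendsto.mul_const (b := eLpNorm f 2 volume) h1
      (Or.inr (f.memLp 2 volume).eLpNorm_ne_top)
    have h3 := (tendsto_const_nhds (x := eLpNorm (fderiv ℝ f) 2 volume)).add h2
    simpa using ENNReal.Tendsto.const_mul h3 (Or.inr (ENNReal.coe_ne_top (r := S)))
  calc eLpNorm f q volume ≤ atTop.liminf fun n => eLpNorm (u n) q volume :=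
        Lp.eLpNorm_lim_le_liminf_eLpNorm
          (fun n => (hud n).continuous.aestronglyMeasurable) _ (ae_of_all _ hlim)
    _ ≤ atTop.liminf fun n => (S : ℝ≥0∞) * (eLpNorm (fderiv ℝ f) 2 volume +
      ENNReal.ofReal (K * ε n) * eLpNorm f 2 volume) := liminf_le_liminf (.of_forall hstep)
    _ = _ := hL.liminf_eq

theorem lintegral_ball_norm_rpow (N : ℕ) (hN : 3 ≤ N) (a : ℝ) (ha : a < N) :
    ∃ c : ℝ, 0 ≤ c ∧ ∀ R : ℝ, 0 < R →
      ∫⁻ x in Metric.ball (0 : EuclideanSpace ℝ (Fin N)) R, ENNReal.ofReal (‖x‖ ^ (-a))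
        = ENNReal.ofReal (c * R ^ (N - a)) := by
  refine ⟨∫ x in Metric.ball (0 : EuclideanSpace ℝ (Fin N)) 1, ‖x‖ ^ (-a),
    integral_nonneg fun x => by positivity, fun R hR => ?_⟩
  have hint : IntegrableOn (fun x : EuclideanSpace ℝ (Fin N) => ‖x‖ ^ (-a))
      (Metric.ball 0 R) := by
    refine integrableOn_ball_of_norm_le_rpow (C := 1) (α := a)
      (by rw [finrank_euclideanSpace_fin]; omega) (by rwa [finrank_euclideanSpace_fin])
      (ae_of_all _ fun x => ?_) ?_
    · rw [one_mul, Real.norm_of_nonneg (by positivity)]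
    · exact (measurable_norm.pow_const _).aestronglyMeasurable
  rw [← ofReal_integral_eq_lintegral_ofReal hint (ae_of_all _ fun x => by positivity)]
  congr 1
  have h := Measure.setIntegral_comp_smul_of_pos
    (volume : Measure (EuclideanSpace ℝ (Fin N))) (fun x => ‖x‖ ^ (-a)) (Metric.ball 0 1) hR
  rw [smul_unitBall_of_pos hR, finrank_euclideanSpace_fin] at h
  simp only [norm_smul, Real.norm_of_nonneg hR.le, Real.mul_rpow hR.le (norm_nonneg _),
    integral_const_mul, smul_eq_mul] at h
  rw [eq_inv_mul_iff_mul_eq₀ (by positivity)] at h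
  rw [← h, sub_eq_add_neg, Real.rpow_add hR, Real.rpow_natCast]
  ring

/-- The near/far split: Hölder's inequality against the weight inside the ball of radius `R`,
and `‖x‖ ^ (-b) ≤ R ^ (-b)` together with interpolation between the exponents `2` and `q`
outside it. -/
theorem lintegral_weight_le {N : ℕ} {b p q s t θ R : ℝ} (hb : 0 < b) (hR : 0 < R)
    (hs : 0 < s) (ht : 0 ≤ t) (hst : s + t = 1) (hqt : q * t = p + 1) (hθ0 : 0 ≤ θ)
    (hθ1 : θ ≤ 1) (hqθ : 2 * (1 - θ) + q * θ = p + 1) (hq : 0 ≤ q)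
    (F : EuclideanSpace ℝ (Fin N) → ℝ≥0∞) (hF : Measurable F) :
    ∫⁻ x, ENNReal.ofReal (‖x‖ ^ (-b)) * F x ^ (p + 1) ≤
      (∫⁻ x in Metric.ball (0 : EuclideanSpace ℝ (Fin N)) R,
          ENNReal.ofReal (‖x‖ ^ (-(b / s)))) ^ s * (∫⁻ x, F x ^ q) ^ t
      + ENNReal.ofReal (R ^ (-b)) *
          ((∫⁻ x, F x ^ (2 : ℝ)) ^ (1 - θ) * (∫⁻ x, F x ^ q) ^ θ) := by
  rw [← lintegral_add_compl _ (Metric.isOpen_ball (x := (0 : EuclideanSpace ℝ (Fin N)))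
    (ε := R)).measurableSet]
  have hW : Measurable fun x : EuclideanSpace ℝ (Fin N) =>
      ENNReal.ofReal (‖x‖ ^ (-(b / s))) := (measurable_norm.pow_const _).ennreal_ofReal
  have hFq : Measurable fun x => F x ^ q := hF.pow_const _
  have hF2 : Measurable fun x => F x ^ (2 : ℝ) := hF.pow_const _
  refine add_le_add ?_ ?_
  · have e : ∀ x : EuclideanSpace ℝ (Fin N), ENNReal.ofReal (‖x‖ ^ (-b)) * F x ^ (p + 1) =
        ENNReal.ofReal (‖x‖ ^ (-(b / s))) ^ s * (F x ^ q) ^ t := by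
      intro x
      rw [ENNReal.ofReal_rpow_of_nonneg (by positivity) hs.le, ← Real.rpow_mul (norm_nonneg _),
        ← ENNReal.rpow_mul, hqt, neg_mul, div_mul_cancel₀ _ hs.ne']
    simp only [e]
    refine (ENNReal.lintegral_mul_norm_pow_le hW.aemeasurable hFq.aemeasurable hs.le ht hst).trans
      ?_
    gcongr
    exact Measure.restrict_le_self
  · have e : ∀ x, F x ^ (p + 1) = (F x ^ (2 : ℝ)) ^ (1 - θ) * (F x ^ q) ^ θ := by
      intro x
      rw [← ENNReal.rpow_mul, ← ENNReal.rpow_mul,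
        ← ENNReal.rpow_add_of_nonneg _ _ (by nlinarith) (by positivity), hqθ]
    calc ∫⁻ x in (Metric.ball (0 : EuclideanSpace ℝ (Fin N)) R)ᶜ,
          ENNReal.ofReal (‖x‖ ^ (-b)) * F x ^ (p + 1)
        ≤ ∫⁻ x in (Metric.ball (0 : EuclideanSpace ℝ (Fin N)) R)ᶜ,
          ENNReal.ofReal (R ^ (-b)) * F x ^ (p + 1) := by
          refine setLIntegral_mono' Metric.isOpen_ball.measurableSet.compl fun x hx => ?_
          have hx' : R ≤ ‖x‖ := by simpa using hx
          gcongr ENNReal.ofReal ?_ * _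
          exact Real.rpow_le_rpow_of_nonpos hR hx' (by linarith)
      _ ≤ ∫⁻ x, ENNReal.ofReal (R ^ (-b)) * F x ^ (p + 1) := setLIntegral_le_lintegral _ _
      _ = ENNReal.ofReal (R ^ (-b)) * ∫⁻ x, F x ^ (p + 1) :=
          lintegral_const_mul _ (hF.pow_const _)
      _ ≤ _ := by
          simp only [e]
          gcongr
          exact ENNReal.lintegral_mul_norm_pow_le hF2.aemeasurable hFq.aemeasurable
            (by linarith) hθ0 (by ring)

/-- The dictionary between the real-valued integrals and the extended norms. -/
theorem schwartz_norms {N : ℕ} (f : SchwartzMap (EuclideanSpace ℝ (Fin N)) ℂ) :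
    (∫⁻ x, ‖f x‖ₑ ^ (2 : ℝ) = ENNReal.ofReal (∫ x, ‖f x‖ ^ 2)) ∧
    (eLpNorm (fderiv ℝ f) 2 volume ≤ ENNReal.ofReal ((∫ x, ∑ i : Fin N,
              ‖fderiv ℝ (⇑f) x (EuclideanSpace.single i 1)‖ ^ 2) ^ ((1:ℝ)/2))) := by
  have hcd : Continuous (fderiv ℝ f) := (f.smooth 1).continuous_fderiv one_ne_zero
  have hmem : MemLp (fderiv ℝ f) 2 volume :=
    (SchwartzMap.fderivCLM ℝ _ _ f).memLp 2 volume
  constructor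
  · rw [ofReal_integral_eq_lintegral_ofReal (f.memLp 2 volume).norm.integrable_sq
      (ae_of_all _ fun x => by positivity)]
    refine lintegral_congr fun x => ?_
    rw [← ofReal_norm, ENNReal.ofReal_rpow_of_nonneg (norm_nonneg _) (by norm_num)]
    norm_num
  · have hi : Integrable (fun x => ∑ i : Fin N,
        ‖fderiv ℝ (⇑f) x (EuclideanSpace.single i 1)‖ ^ 2) volume := by
      refine integrable_finsetSum _ fun i _ => ?_
      have hm : MemLp (fun x => fderiv ℝ f x (EuclideanSpace.single i 1)) 2 volume := by
        refine hmem.of_le (hcd.clm_apply continuous_const).aestronglyMeasurable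
          (ae_of_all _ fun x => ?_)
        simpa using (fderiv ℝ f x).le_opNorm (EuclideanSpace.single i 1)
      exact hm.norm.integrable_sq
    rw [eLpNorm_eq_lintegral_rpow_enorm_toReal two_ne_zero ENNReal.ofNat_ne_top,
      ← ENNReal.ofReal_rpow_of_nonneg (integral_nonneg fun x => by positivity) (by norm_num),
      ofReal_integral_eq_lintegral_ofReal hi (ae_of_all _ fun x => by positivity)]
    simp only [ENNReal.toReal_ofNat]
    gcongr with x
    rw [← ofReal_norm, ENNReal.ofReal_rpow_of_nonneg (norm_nonneg _) (by norm_num)]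
    refine ENNReal.ofReal_le_ofReal ?_
    simpa using opNorm_sq_le_sum (fderiv ℝ f x)

/-- Balancing the near and far contributions with `R = A / B`, where `A` and `B` stand for the
`L²` norms of `f` and of its gradient. -/
theorem balance {n b p q s t θ A B S c : ℝ} (hA : 0 < A) (hB : 0 < B) (hS : 0 ≤ S)
    (hc : 0 ≤ c) (hs : 0 < s) (hqt : q * t = p + 1)
    (hqθ : 2 * (1 - θ) + q * θ = p + 1)
    (h1 : n * s - b = (p + 1) - (n * (p - 1) + 2 * b) / 2)
    (h2 : q * θ = n * (p - 1) / 2) :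
    (c * (A / B) ^ (n - b / s)) ^ s * ((S * B) ^ q) ^ t
      + (A / B) ^ (-b) * ((A ^ (2:ℝ)) ^ (1 - θ) * ((S * B) ^ q) ^ θ)
    = (c ^ s * S ^ (p + 1) + S ^ (q * θ)) * B ^ ((n * (p - 1) + 2 * b) / 2)
        * A ^ ((p + 1) - (n * (p - 1) + 2 * b) / 2) := by
  have hR : 0 < A / B := by positivity
  have hSB : 0 ≤ S * B := by positivity
  have e1 : (n - b / s) * s = n * s - b := by field_simp
  rw [Real.mul_rpow hc (by positivity), ← Real.rpow_mul hR.le, e1, h1,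
    ← Real.rpow_mul hSB, ← Real.rpow_mul hSB, ← Real.rpow_mul hA.le, hqt,
    Real.mul_rpow hS hB.le, Real.mul_rpow hS hB.le, Real.div_rpow hA.le hB.le,
    Real.div_rpow hA.le hB.le]
  have e2 : B ^ (p + 1) = B ^ ((n * (p - 1) + 2 * b) / 2) *
      B ^ ((p + 1) - (n * (p - 1) + 2 * b) / 2) := by
    rw [← Real.rpow_add hB]; congr 1; ring
  have e3 : B ^ ((n * (p - 1) + 2 * b) / 2) = B ^ (q * θ) * B ^ b := by
    rw [← Real.rpow_add hB]; congr 1; linarith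
  have e4 : A ^ (2 * (1 - θ)) = A ^ ((p + 1) - (n * (p - 1) + 2 * b) / 2) * A ^ b := by
    rw [← Real.rpow_add hA]; congr 1; linarith
  rw [e2, e4, e3, Real.rpow_neg hA.le, Real.rpow_neg hB.le]
  field_simp

/-- Weighted Gagliardo–Nirenberg inequality:
`∫ |x|^{−b}|f|^{p+1} ≤ C ‖∇f‖_{L²}^{(N(p−1)+2b)/2} ‖f‖_{L²}^{(p+1)−(N(p−1)+2b)/2}`. -/
theorem stmt12 (N : ℕ) (hN : 3 ≤ N) (b p : ℝ) (hb : 0 < b) (hb2 : b < 2)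
    (hp1 : 1 < p) (hp2 : p < 1 + (4 - 2*b)/((N:ℝ) - 2)) :
    ∃ C : ℝ, 0 < C ∧ ∀ f : SchwartzMap (EuclideanSpace ℝ (Fin N)) ℂ,
      (∫ x, ‖x‖ ^ (-b) * ‖f x‖ ^ (p + 1))
        ≤ C * ((∫ x, ∑ i : Fin N,
              ‖fderiv ℝ (⇑f) x (EuclideanSpace.single i 1)‖ ^ 2) ^ ((1:ℝ)/2))
                ^ ((N*(p-1) + 2*b)/2)
            * ((∫ x, ‖f x‖ ^ 2) ^ ((1:ℝ)/2)) ^ ((p+1) - (N*(p-1) + 2*b)/2) := by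
  have hN3 : (3 : ℝ) ≤ N := by exact_mod_cast hN
  have hn2 : 0 < (N : ℝ) - 2 := by linarith
  have hsub : (p - 1) * ((N : ℝ) - 2) < 4 - 2 * b := by
    rw [← lt_div_iff₀ hn2]; linarith
  set q : ℝ := 2 * N / (N - 2) with hq
  have hqpos : 0 < q := by positivity
  -- `1 / s` is the Hölder exponent of the weight and `1 / t` that of `|f| ^ (p + 1)`
  set t : ℝ := (p + 1) / q with ht
  set s : ℝ := 1 - t with hs
  set θ : ℝ := (p - 1) * (N - 2) / 4 with hθ
  have htpos : 0 < t := by positivity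
  have hNt : N * t = (p + 1) * (N - 2) / 2 := by rw [ht, hq]; field_simp
  have hNs : b < N * s := by rw [hs, mul_sub, hNt]; nlinarith
  have hspos : 0 < s := by
    by_contra h
    nlinarith
  have hqt : q * t = p + 1 := by rw [ht]; field_simp
  have hqθ' : q * θ = N * (p - 1) / 2 := by rw [hq, hθ]; field_simp; ring
  have hθ2 : 2 * (1 - θ) + q * θ = p + 1 := by rw [hqθ', hθ]; ring
  have hθ0 : 0 ≤ θ := by rw [hθ]; have := sub_pos.2 hp1; positivity
  have hθ1 : θ ≤ 1 := by rw [hθ]; linarith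
  have hσ : N * s - b = (p + 1) - (N * (p - 1) + 2 * b) / 2 := by
    rw [hs, mul_sub, hNt]; ring
  obtain ⟨S, hS⟩ := sobolev_schwartz N hN q.toNNReal (by
    rw [Real.coe_toNNReal _ hqpos.le, hq]; field_simp)
  obtain ⟨c, hc, hcR⟩ := lintegral_ball_norm_rpow N hN (b / s) (by rwa [div_lt_iff₀ hspos])
  refine ⟨c ^ s * (S : ℝ) ^ (p + 1) + (S : ℝ) ^ (q * θ) + 1, by positivity, fun f => ?_⟩
  obtain ⟨hA2, hBle⟩ := schwartz_norms f
  set B : ℝ := (∫ x, ∑ i : Fin N,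
    ‖fderiv ℝ (⇑f) x (EuclideanSpace.single i 1)‖ ^ 2) ^ ((1:ℝ)/2) with hB
  set A : ℝ := (∫ x, ‖f x‖ ^ 2) ^ ((1:ℝ)/2) with hA
  have hB0 : 0 ≤ B := Real.rpow_nonneg (integral_nonneg fun x => by positivity) _
  have hI0 : 0 ≤ ∫ x, ‖f x‖ ^ 2 := integral_nonneg fun x => by positivity
  have hA0 : 0 ≤ A := Real.rpow_nonneg hI0 _
  have hAsq : ∫ x, ‖f x‖ ^ 2 = A ^ (2 : ℝ) := by
    rw [hA, ← Real.rpow_mul hI0]; norm_num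
  rw [hAsq] at hA2
  have hmeas : Measurable fun x => ‖f x‖ₑ := f.continuous.enorm.measurable
  have hSob : eLpNorm f q.toNNReal volume ≤ ENNReal.ofReal (S * B) := by
    refine (hS f).trans ?_
    rw [ENNReal.ofReal_mul S.coe_nonneg, ENNReal.ofReal_coe_nnreal]
    gcongr
  have hQ : ∫⁻ x, ‖f x‖ₑ ^ q ≤ ENNReal.ofReal ((S * B) ^ q) := by
    have h := eLpNorm_nnreal_pow_eq_lintegral (f := f) (μ := volume) (p := q.toNNReal)
      (by simpa using hqpos)
    rw [Real.coe_toNNReal _ hqpos.le] at h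
    rw [← h, ← ENNReal.ofReal_rpow_of_nonneg (by positivity) hqpos.le]
    gcongr
  -- if either norm vanishes then `f = 0` almost everywhere
  have hzero : (∀ᵐ x, f x = 0) → (∫ x, ‖x‖ ^ (-b) * ‖f x‖ ^ (p + 1)) = 0 := fun h => by
    rw [integral_eq_zero_of_ae]
    filter_upwards [h] with x hx
    simp [hx, Real.zero_rpow (by linarith : p + 1 ≠ 0)]
  have hae : ∀ r : ℝ, 0 < r → ∫⁻ x, ‖f x‖ₑ ^ r = 0 → ∀ᵐ x, f x = 0 := fun r hr h => by
    rw [lintegral_eq_zero_iff (hmeas.pow_const _)] at h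
    filter_upwards [h] with x hx
    simpa [hr, hr.not_gt] using hx
  have hRHS : 0 ≤ (c ^ s * (S : ℝ) ^ (p + 1) + (S : ℝ) ^ (q * θ) + 1) *
      B ^ ((N*(p-1) + 2*b)/2) * A ^ ((p+1) - (N*(p-1) + 2*b)/2) := by positivity
  rcases hA0.eq_or_lt with hAz | hApos
  · rw [hzero (hae 2 two_pos (by rw [hA2, ← hAz]; simp))]
    exact hRHS
  rcases hB0.eq_or_lt with hBz | hBpos
  · rw [hzero (hae q hqpos (le_antisymm (hQ.trans (by
      rw [← hBz, mul_zero, Real.zero_rpow hqpos.ne', ENNReal.ofReal_zero])) bot_le))]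
    exact hRHS
  have hR : 0 < A / B := by positivity
  have key := lintegral_weight_le hb hR hspos htpos.le (by rw [hs]; ring) hqt hθ0 hθ1 hθ2
    hqpos.le (fun x => ‖f x‖ₑ) hmeas
  rw [hcR _ hR, hA2] at key
  have key2 : ∫⁻ x, ENNReal.ofReal (‖x‖ ^ (-b)) * ‖f x‖ₑ ^ (p + 1) ≤
      ENNReal.ofReal ((c * (A / B) ^ (N - b / s)) ^ s * ((S * B) ^ q) ^ t
      + (A / B) ^ (-b) * ((A ^ (2:ℝ)) ^ (1 - θ) * ((S * B) ^ q) ^ θ)) := by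
    refine key.trans ?_
    rw [ENNReal.ofReal_add (by positivity) (by positivity),
      ENNReal.ofReal_mul (p := (c * (A / B) ^ (N - b / s)) ^ s) (by positivity),
      ENNReal.ofReal_mul (p := (A / B) ^ (-b)) (by positivity),
      ENNReal.ofReal_mul (p := (A ^ (2:ℝ)) ^ (1 - θ)) (by positivity),
      ← ENNReal.ofReal_rpow_of_nonneg (by positivity) hspos.le,
      ← ENNReal.ofReal_rpow_of_nonneg (by positivity) htpos.le,
      ← ENNReal.ofReal_rpow_of_nonneg (by positivity) hθ0,
      ← ENNReal.ofReal_rpow_of_nonneg (by positivity) (by linarith : 0 ≤ 1 - θ)]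
    gcongr
  rw [balance hApos hBpos S.coe_nonneg hc hspos hqt hθ2 hσ hqθ'] at key2
  have hle : (∫ x, ‖x‖ ^ (-b) * ‖f x‖ ^ (p + 1)) ≤
      (c ^ s * (S : ℝ) ^ (p + 1) + (S : ℝ) ^ (q * θ)) * B ^ ((N*(p-1) + 2*b)/2)
        * A ^ ((p+1) - (N*(p-1) + 2*b)/2) := by
    have hm : Measurable fun x => ‖x‖ ^ (-b) * ‖f x‖ ^ (p + 1) :=
      (measurable_norm.pow_const _).mul (f.continuous.norm.measurable.pow_const _)
    rw [integral_eq_lintegral_of_nonneg_ae (ae_of_all _ fun x => by positivity)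
      hm.aestronglyMeasurable]
    refine ENNReal.toReal_le_of_le_ofReal (by positivity) (le_trans (le_of_eq ?_) key2)
    refine lintegral_congr fun x => ?_
    rw [ENNReal.ofReal_mul (by positivity), ← ofReal_norm,
      ENNReal.ofReal_rpow_of_nonneg (norm_nonneg _) (by linarith)]
  refine hle.trans ?_
  gcongr ?_ * _ * _
  linarith
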